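/- Let γ : ℝ → ℝ³, γ(t) = (x_t, y_t, z_t), be a path, differentiable at 0, such that x_t + y_t + z_t = π and x_t, y_t, z_t ≥ 0 for all t in some interval [0, δ) with δ > 0, with x₀, y₀ ∈ (0, π), z₀ = 0 and (dz_t/dt)|_{t=0} > 0. Then the right difference quotient of the volume tends to +∞: the function t ↦ (𝒱(x_t,y_t,z_t) − 𝒱(x₀,y₀,z₀))/t tends to +∞ as t → 0⁺ (i.e., along the filter 𝓝[>] 0). -/

import Mathlib

/-- The Lobachevsky-type integral `∫₀ˣ log(2 sin u) du`. -/
noncomputable def lob (x : ℝ) : ℝ := ∫ u in (0:ℝ)..x, Real.log (2 * Real.sin u)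

/-- The volume `𝒱(x,y,z)` of the ideal hyperbolic tetrahedron with dihedral angles
`x, y, z`. -/
noncomputable def idealVol (p : ℝ × ℝ × ℝ) : ℝ := -lob p.1 - lob p.2.1 - lob p.2.2

lemma ii_aux (a b : ℝ) :
    IntervalIntegrable (fun u => Real.log (2 * Real.sin u)) MeasureTheory.volume a b := by
  have h : MeromorphicOn (fun u : ℝ => 2 * Real.sin u) (Set.uIcc a b) := by
    intro u _
    have : AnalyticAt ℝ (fun u : ℝ => 2 * Real.sin u) u := by fun_prop
    exact this.meromorphicAt
  exact h.intervalIntegrable_log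

lemma lob_deriv (a : ℝ) (ha : a ∈ Set.Ioo 0 Real.pi) :
    HasDerivAt lob (Real.log (2 * Real.sin a)) a := by
  have hs := Real.sin_pos_of_mem_Ioo ha
  refine intervalIntegral.integral_hasDerivAt_right (ii_aux 0 a) ?_ ?_
  · refine (Measurable.stronglyMeasurable ?_).stronglyMeasurableAtFilter
    fun_prop
  · refine ContinuousAt.log (by fun_prop) (by positivity)

lemma lob_le (z : ℝ) (h0 : 0 < z) (h1 : z < Real.pi) : lob z ≤ z * Real.log (2 * z) := by
  have h : lob z ≤ ∫ u in (0:ℝ)..z, Real.log (2 * z) := by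
    refine intervalIntegral.integral_mono_on_of_le_Ioo h0.le (ii_aux 0 z) (by simp) ?_
    intro u hu
    have hs := Real.sin_pos_of_mem_Ioo (x := u) ⟨hu.1, hu.2.trans h1⟩
    refine Real.log_le_log (by positivity) ?_
    linarith [Real.sin_lt hu.1, hu.2]
  simpa using h

/-- Simple degeneracy: along a path of angle triples, differentiable at `0`, with
`x₀, y₀ ∈ (0,π)`, `z₀ = 0` and `(dz/dt)|₀ > 0`, the right difference quotient of the
volume tends to `+∞` as `t → 0⁺`. -/
theorem simple_degeneracy (x y z : ℝ → ℝ) (X Y Z δ : ℝ) (hδ : 0 < δ)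
    (hx : HasDerivAt x X 0) (hy : HasDerivAt y Y 0) (hz : HasDerivAt z Z 0)
    (hZ : 0 < Z)
    (hsum : ∀ t ∈ Set.Ico 0 δ, x t + y t + z t = Real.pi)
    (hnonneg : ∀ t ∈ Set.Ico 0 δ, 0 ≤ x t ∧ 0 ≤ y t ∧ 0 ≤ z t)
    (hx0 : x 0 ∈ Set.Ioo 0 Real.pi) (hy0 : y 0 ∈ Set.Ioo 0 Real.pi) (hz0 : z 0 = 0) :
    Filter.Tendsto
      (fun t => (idealVol (x t, y t, z t) - idealVol (x 0, y 0, z 0)) / t)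
      (nhdsWithin 0 (Set.Ioi 0)) Filter.atTop := by
  have hl0 : lob 0 = 0 := by simp [lob]
  have hX := (HasDerivAt.comp (0:ℝ) (lob_deriv _ hx0) hx).tendsto_slope_zero_right
  have hY := (HasDerivAt.comp (0:ℝ) (lob_deriv _ hy0) hy).tendsto_slope_zero_right
  have hZ' := hz.tendsto_slope_zero_right
  simp only [zero_add, smul_eq_mul, Function.comp, hz0, sub_zero] at hX hY hZ'
  have hzpos : ∀ᶠ t in nhdsWithin (0:ℝ) (Set.Ioi 0), 0 < z t := by
    filter_upwards [hZ'.eventually (lt_mem_nhds hZ), self_mem_nhdsWithin] with t ht ht0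
    have ht0 : 0 < t := ht0
    exact (mul_pos_iff_of_pos_left (inv_pos.2 ht0)).1 ht
  have hzt : Filter.Tendsto z (nhdsWithin (0:ℝ) (Set.Ioi 0)) (nhds 0) := by
    have := hz.continuousAt.tendsto
    rw [hz0] at this
    exact this.mono_left nhdsWithin_le_nhds
  have hzt2 : Filter.Tendsto (fun t => 2 * z t) (nhdsWithin (0:ℝ) (Set.Ioi 0))
      (nhdsWithin 0 (Set.Ioi 0)) := by
    refine tendsto_nhdsWithin_iff.2 ⟨by simpa using hzt.const_mul 2, ?_⟩
    filter_upwards [hzpos] with t ht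
    exact mul_pos two_pos ht
  have hlog := Filter.tendsto_neg_atBot_atTop.comp (Real.tendsto_log_nhdsGT_zero.comp hzt2)
  have hmain := Filter.Tendsto.pos_mul_atTop hZ hZ' hlog
  have hall := Filter.Tendsto.add_atTop (hX.neg.add hY.neg) hmain
  refine Filter.tendsto_atTop_mono' _ ?_ hall
  filter_upwards [hzpos, hzt.eventually (gt_mem_nhds Real.pi_pos), self_mem_nhdsWithin]
    with t h1 h2 h3
  have h3 : 0 < t := h3
  have h4 := mul_le_mul_of_nonneg_left (lob_le _ h1 h2) (inv_pos.2 h3).le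
  simp only [idealVol, hz0, hl0, Function.comp, div_eq_inv_mul]
  linarith
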